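/- arXiv:2410.08910 — 3 statements merged into one kernel-verified Lean document; each statement's English description precedes it below -/
import Mathlib

section
/- Let Ω ⊂ ℝⁿ be a bounded open set, T > 0, and let k ∈ C¹([0,T];ℝ) with γ(t) = k(t)k'(t). Then the sesquilinear form a_L is continuous and satisfies a Gårding inequality uniformly in t: there exist constants C > 0 and λ₀ > 0 such that for all t ∈ [0,T] and all u, w ∈ C_c^∞(Ω;ℂ), (i) |a_L(t;u,w)| ≤ C‖u‖_{H¹}‖w‖_{H¹}, and (ii) Re a_L(t;u,u) + λ₀‖u‖²_{L²(Ω)} ≥ (1/2)‖∇u‖²_{L²(Ω)}, where ‖u‖²_{H¹} = ‖u‖²_{L²(Ω)} + ‖∇u‖²_{L²(Ω)}. -/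
open MeasureTheory Set

/-- The sum over coordinates of `∂u/∂yⱼ · conj(∂w/∂yⱼ)`, i.e. `∇u · conj ∇w`. -/
noncomputable def gradDotConj (n : ℕ) (u w : EuclideanSpace ℝ (Fin n) → ℂ)
    (y : EuclideanSpace ℝ (Fin n)) : ℂ :=
  ∑ j : Fin n,
    fderiv ℝ u y (EuclideanSpace.single j 1) *
      starRingEnd ℂ (fderiv ℝ w y (EuclideanSpace.single j 1))

/-- The squared euclidean norm of the gradient of `u` at `y`. -/
noncomputable def gradNormSq (n : ℕ) (u : EuclideanSpace ℝ (Fin n) → ℂ)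
    (y : EuclideanSpace ℝ (Fin n)) : ℝ :=
  ∑ j : Fin n, ‖fderiv ℝ u y (EuclideanSpace.single j 1)‖ ^ 2

/-- The sesquilinear form `a_L(t; u, w) = (∇u, ∇w) + i γ(t) (y·∇u, w)`, where
`γ` is the real parameter `γ(t) = k(t) k'(t)`.  Note `y·∇u(y) = (fderiv ℝ u y) y`. -/
noncomputable def aL (n : ℕ) (γ : ℝ) (Ω : Set (EuclideanSpace ℝ (Fin n)))
    (u w : EuclideanSpace ℝ (Fin n) → ℂ) : ℂ :=
  (∫ y in Ω, gradDotConj n u w y) +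
    Complex.I * (γ : ℂ) * ∫ y in Ω, fderiv ℝ u y y * starRingEnd ℂ (w y)

lemma aux_cs {E : Type*} [MeasurableSpace E] (μ : Measure E) (F : E → ℂ) (p q : E → ℝ) (M : ℝ)
    (hM : 0 ≤ M) (hp : ∀ y, 0 ≤ p y) (hq : ∀ y, 0 ≤ q y) (hpi : Integrable p μ)
    (hqi : Integrable q μ) (hF : ∀ᵐ y ∂μ, ‖F y‖ ≤ M * (Real.sqrt (p y) * Real.sqrt (q y))) :
    ‖∫ y, F y ∂μ‖ ≤ M * (Real.sqrt (∫ y, p y ∂μ) * Real.sqrt (∫ y, q y ∂μ)) := by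
  have key : ∀ p : E → ℝ, (∀ y, 0 ≤ p y) → Integrable p μ →
      MemLp (fun y => Real.sqrt (p y)) (ENNReal.ofReal 2) μ := by
    intro p hp hpi
    have h2 : ENNReal.ofReal 2 = 2 := by simp
    rw [h2, memLp_two_iff_integrable_sq
      (Real.continuous_sqrt.comp_aestronglyMeasurable hpi.aestronglyMeasurable)]
    simpa [Real.sq_sqrt (hp _)] using hpi
  have hP := key p hp hpi
  have hQ := key q hq hqi
  have hH := integral_mul_le_Lp_mul_Lq_of_nonneg (μ := μ) (Real.HolderConjugate.two_two)
    (ae_of_all _ fun y => Real.sqrt_nonneg (p y)) (ae_of_all _ fun y => Real.sqrt_nonneg (q y)) hP hQ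
  simp only [Real.rpow_two, Real.sq_sqrt (hp _), Real.sq_sqrt (hq _)] at hH
  rw [← Real.sqrt_eq_rpow, ← Real.sqrt_eq_rpow] at hH
  have hint : Integrable (fun y => M * (Real.sqrt (p y) * Real.sqrt (q y))) μ := by
    have h2 : ENNReal.ofReal 2 = 2 := by simp
    rw [h2] at hP hQ
    exact (hP.integrable_mul hQ).const_mul M
  calc _ ≤ ∫ y, M * (Real.sqrt (p y) * Real.sqrt (q y)) ∂μ := norm_integral_le_of_norm_le hint hF
    _ = M * ∫ y, (Real.sqrt (p y) * Real.sqrt (q y)) ∂μ := integral_const_mul _ _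
    _ ≤ _ := mul_le_mul_of_nonneg_left hH hM

lemma aux_grad_nonneg (n : ℕ) (u : EuclideanSpace ℝ (Fin n) → ℂ) (y) : 0 ≤ gradNormSq n u y :=
  Finset.sum_nonneg fun _ _ => sq_nonneg _

lemma aux_dot (n : ℕ) (u w : EuclideanSpace ℝ (Fin n) → ℂ) (y) :
    ‖gradDotConj n u w y‖ ≤ Real.sqrt (gradNormSq n u y) * Real.sqrt (gradNormSq n w y) := by
  unfold gradDotConj gradNormSq
  refine (norm_sum_le _ _).trans ?_
  simp only [norm_mul, RCLike.norm_conj]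
  exact Real.sum_mul_le_sqrt_mul_sqrt _ _ _

lemma aux_rad (n : ℕ) (u : EuclideanSpace ℝ (Fin n) → ℂ) (y) :
    ‖fderiv ℝ u y y‖ ≤ ‖y‖ * Real.sqrt (gradNormSq n u y) := by
  have h : fderiv ℝ u y y = ∑ j, (y j) • fderiv ℝ u y (EuclideanSpace.single j 1) := by
    have hy : y = ∑ j, (y j) • EuclideanSpace.single j (1 : ℝ) := by
      have := (EuclideanSpace.basisFun (Fin n) ℝ).sum_repr y
      simpa using this.symm
    conv_lhs => rw [show fderiv ℝ u y y = fderiv ℝ u y (∑ j, (y j) • EuclideanSpace.single j (1 : ℝ)) from congrArg _ hy]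
    simp only [map_sum, map_smul]
  rw [h, EuclideanSpace.norm_eq]
  unfold gradNormSq
  refine (norm_sum_le _ _).trans ?_
  simp only [norm_smul]
  exact Real.sum_mul_le_sqrt_mul_sqrt _ _ _

lemma aux_grad_int (n : ℕ) (Ω : Set (EuclideanSpace ℝ (Fin n))) (u : EuclideanSpace ℝ (Fin n) → ℂ)
    (hu : ContDiff ℝ (⊤ : ℕ∞) u) (hc : HasCompactSupport u) :
    IntegrableOn (gradNormSq n u) Ω := by
  apply Integrable.integrableOn
  unfold gradNormSq
  refine integrable_finsetSum _ fun j _ => ?_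
  have h1 : Continuous (fun y => fderiv ℝ u y (EuclideanSpace.single j 1)) :=
    (hu.continuous_fderiv (by simp)).clm_apply continuous_const
  refine Continuous.integrable_of_hasCompactSupport (by fun_prop) ?_
  exact (hc.fderiv_apply ℝ _).comp_left (g := fun z : ℂ => ‖z‖ ^ 2) (by simp)

lemma aux_sq_int (n : ℕ) (Ω : Set (EuclideanSpace ℝ (Fin n))) (u : EuclideanSpace ℝ (Fin n) → ℂ)
    (hu : ContDiff ℝ (⊤ : ℕ∞) u) (hc : HasCompactSupport u) :
    IntegrableOn (fun y => ‖u y‖ ^ 2) Ω := by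
  apply Integrable.integrableOn
  have := hu.continuous
  refine Continuous.integrable_of_hasCompactSupport (by fun_prop) ?_
  exact hc.comp_left (g := fun z : ℂ => ‖z‖ ^ 2) (by simp)

lemma aux_gamma (T : ℝ) (hT : 0 < T) (k : ℝ → ℝ) (hk : ContDiffOn ℝ 1 k (Icc 0 T)) :
    ∃ B : ℝ, 0 ≤ B ∧ ∀ t ∈ Icc (0 : ℝ) T, |k t * deriv k t| ≤ B := by
  have hU := uniqueDiffOn_Icc hT
  have hc : ContinuousOn (fun t => k t * derivWithin k (Icc 0 T) t) (Icc 0 T) :=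
    hk.continuousOn.mul (hk.continuousOn_derivWithin hU le_rfl)
  obtain ⟨B, hB⟩ := isCompact_Icc.exists_bound_of_continuousOn hc
  refine ⟨max B 0, le_max_right _ _, fun t ht => ?_⟩
  by_cases hd : DifferentiableAt ℝ k t
  · rw [← hd.derivWithin (hU t ht)]
    exact (hB t ht).trans (le_max_left _ _)
  · simp [deriv_zero_of_not_differentiableAt hd]

lemma aux_dot_self (n : ℕ) (u : EuclideanSpace ℝ (Fin n) → ℂ) (y) :
    gradDotConj n u u y = ((gradNormSq n u y : ℝ) : ℂ) := by
  unfold gradDotConj gradNormSq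
  push_cast
  exact Finset.sum_congr rfl fun j _ => Complex.mul_conj' _

/-- Continuity and Gårding inequality for the sesquilinear form `a_L`,
uniformly in `t ∈ [0, T]`. -/
theorem aL_continuous_and_garding_uniform
    (n : ℕ) (Ω : Set (EuclideanSpace ℝ (Fin n)))
    (hΩo : IsOpen Ω) (hΩb : Bornology.IsBounded Ω)
    (T : ℝ) (hT : 0 < T) (k : ℝ → ℝ) (hk : ContDiffOn ℝ 1 k (Icc 0 T)) :
    ∃ C > (0 : ℝ), ∃ lam > (0 : ℝ), ∀ t ∈ Icc (0 : ℝ) T,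
      ∀ u w : EuclideanSpace ℝ (Fin n) → ℂ,
        ContDiff ℝ (⊤ : ℕ∞) u → HasCompactSupport u → tsupport u ⊆ Ω →
        ContDiff ℝ (⊤ : ℕ∞) w → HasCompactSupport w → tsupport w ⊆ Ω →
        ‖aL n (k t * deriv k t) Ω u w‖ ≤
            C * Real.sqrt ((∫ y in Ω, ‖u y‖ ^ 2) + ∫ y in Ω, gradNormSq n u y) *
              Real.sqrt ((∫ y in Ω, ‖w y‖ ^ 2) + ∫ y in Ω, gradNormSq n w y) ∧
          (1 / 2 : ℝ) * (∫ y in Ω, gradNormSq n u y) ≤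
            (aL n (k t * deriv k t) Ω u u).re + lam * ∫ y in Ω, ‖u y‖ ^ 2 := by
  obtain ⟨B, hB0, hB⟩ := aux_gamma T hT k hk
  obtain ⟨R, hR0, hR⟩ := hΩb.exists_pos_norm_le
  refine ⟨1 + B * R, by positivity, (B * R) ^ 2 / 2 + 1, by positivity, ?_⟩
  intro t ht u w hu hcu _ hw hcw _
  have hg := hB t ht
  generalize k t * deriv k t = g at hg
  have first : ∀ v : EuclideanSpace ℝ (Fin n) → ℂ, ContDiff ℝ (⊤ : ℕ∞) v → HasCompactSupport v →
      ‖Complex.I * (g : ℂ) * ∫ y in Ω, fderiv ℝ u y y * starRingEnd ℂ (v y)‖ ≤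
        B * R * (Real.sqrt (∫ y in Ω, gradNormSq n u y) * Real.sqrt (∫ y in Ω, ‖v y‖ ^ 2)) := by
    intro v hv hcv
    have h := aux_cs (volume.restrict Ω) (fun y => fderiv ℝ u y y * starRingEnd ℂ (v y))
      (gradNormSq n u) (fun y => ‖v y‖ ^ 2) R hR0.le (aux_grad_nonneg n u) (fun _ => sq_nonneg _)
      (aux_grad_int n Ω u hu hcu) (aux_sq_int n Ω v hv hcv) (by
        filter_upwards [ae_restrict_mem hΩo.measurableSet] with y hy
        rw [norm_mul, RCLike.norm_conj, Real.sqrt_sq (norm_nonneg _), ← mul_assoc]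
        refine mul_le_mul_of_nonneg_right ((aux_rad n u y).trans ?_) (norm_nonneg _)
        exact mul_le_mul_of_nonneg_right (hR y hy) (Real.sqrt_nonneg _))
    rw [norm_mul, norm_mul, Complex.norm_I, one_mul, Complex.norm_real, Real.norm_eq_abs, mul_assoc B]
    exact mul_le_mul hg h (norm_nonneg _) hB0
  have hGu : 0 ≤ ∫ y in Ω, gradNormSq n u y := integral_nonneg (aux_grad_nonneg n u)
  have hGw : 0 ≤ ∫ y in Ω, gradNormSq n w y := integral_nonneg (aux_grad_nonneg n w)
  have hUu : 0 ≤ ∫ y in Ω, ‖u y‖ ^ 2 := integral_nonneg fun _ => sq_nonneg _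
  have hUw : 0 ≤ ∫ y in Ω, ‖w y‖ ^ 2 := integral_nonneg fun _ => sq_nonneg _
  constructor
  · have h1 := aux_cs (volume.restrict Ω) (gradDotConj n u w)
      (gradNormSq n u) (gradNormSq n w) 1 zero_le_one (aux_grad_nonneg n u) (aux_grad_nonneg n w)
      (aux_grad_int n Ω u hu hcu) (aux_grad_int n Ω w hw hcw)
      (ae_of_all _ fun y => by rw [one_mul]; exact aux_dot n u w y)
    have h2 := first w hw hcw
    unfold aL
    refine (norm_add_le _ _).trans ((add_le_add h1 h2).trans ?_)
    rw [mul_assoc (1 + B * R), add_mul 1 (B * R)]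
    have s1 := Real.sqrt_le_sqrt (le_add_of_nonneg_left (a := ∫ y in Ω, gradNormSq n u y) hUu)
    have s2 := Real.sqrt_le_sqrt (le_add_of_nonneg_left (a := ∫ y in Ω, gradNormSq n w y) hUw)
    have s3 := Real.sqrt_le_sqrt (le_add_of_nonneg_right (a := ∫ y in Ω, ‖w y‖ ^ 2) hGw)
    refine add_le_add (mul_le_mul_of_nonneg_left ?_ (zero_le_one (α := ℝ)))
      (mul_le_mul_of_nonneg_left ?_ (mul_nonneg hB0 hR0.le))
    · exact mul_le_mul s1 s2 (Real.sqrt_nonneg _) (Real.sqrt_nonneg _)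
    · exact mul_le_mul s1 s3 (Real.sqrt_nonneg _) (Real.sqrt_nonneg _)
  · have h2 := first u hu hcu
    have h3 := (Complex.abs_re_le_norm _).trans h2
    have h4 := (abs_le.1 h3).1
    unfold aL
    rw [Complex.add_re]
    have h5 : (∫ y in Ω, gradDotConj n u u y).re = ∫ y in Ω, gradNormSq n u y := by
      simp only [aux_dot_self]
      rw [integral_complex_ofReal, Complex.ofReal_re]
    rw [h5]
    have e1 := Real.sq_sqrt hGu
    have e2 := Real.sq_sqrt hUu
    nlinarith [sq_nonneg (Real.sqrt (∫ y in Ω, gradNormSq n u y) -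
      B * R * Real.sqrt (∫ y in Ω, ‖u y‖ ^ 2))]
end

section
/- Let Ω ⊂ ℝⁿ be a bounded open set with d_Ω = sup{|y| : y ∈ Ω}, let t be fixed and γ(t) ∈ ℝ. Then for every u ∈ C_c^∞(Ω;ℂ) the explicit Gårding inequality holds: Re a_L(t;u,u) + ((d_Ω |γ(t)|)²/2)‖u‖²_{L²(Ω)} ≥ (1/2)‖∇u‖²_{L²(Ω)}. -/
open MeasureTheory Set

theorem fderiv_self_sq_le (n : ℕ) (u : EuclideanSpace ℝ (Fin n) → ℂ)
    (y : EuclideanSpace ℝ (Fin n)) :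
    ‖fderiv ℝ u y y‖ ^ 2 ≤ ‖y‖ ^ 2 * gradNormSq n u y := by
  have h1 : fderiv ℝ u y y
      = ∑ j : Fin n, (y j) • fderiv ℝ u y (EuclideanSpace.single j 1) := by
    have h := (EuclideanSpace.basisFun (Fin n) ℝ).sum_repr y
    generalize fderiv ℝ u y = L
    conv_lhs => rw [← h]
    simp [map_sum]
  have h2 : ‖fderiv ℝ u y y‖
      ≤ ∑ j : Fin n, ‖y j‖ * ‖fderiv ℝ u y (EuclideanSpace.single j 1)‖ := by
    rw [h1]
    refine (norm_sum_le _ _).trans (le_of_eq ?_)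
    simp
  calc ‖fderiv ℝ u y y‖ ^ 2
      ≤ (∑ j : Fin n, ‖y j‖ * ‖fderiv ℝ u y (EuclideanSpace.single j 1)‖) ^ 2 := by
        gcongr
    _ ≤ (∑ j : Fin n, ‖y j‖ ^ 2)
        * ∑ j : Fin n, ‖fderiv ℝ u y (EuclideanSpace.single j 1)‖ ^ 2 :=
        Finset.sum_mul_sq_le_sq_mul_sq _ _ _
    _ = _ := by rw [EuclideanSpace.norm_sq_eq, gradNormSq]

theorem gradDotConj_self (n : ℕ) (u : EuclideanSpace ℝ (Fin n) → ℂ)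
    (y : EuclideanSpace ℝ (Fin n)) :
    gradDotConj n u u y = ((gradNormSq n u y : ℝ) : ℂ) := by
  simp [gradDotConj, gradNormSq, Complex.mul_conj']

theorem pointwise_garding (g : ℝ) (d G r : ℝ) (a b : ℂ) (hr : 0 ≤ r) (hrd : r ≤ d)
    (hG : 0 ≤ G) (ha : ‖a‖ ^ 2 ≤ r ^ 2 * G) :
    (1 / 2) * G ≤ G + (Complex.I * (g : ℂ) * (a * starRingEnd ℂ b)).re
      + ((d * |g|) ^ 2 / 2) * ‖b‖ ^ 2 := by
  have h1 : -(|g| * (‖a‖ * ‖b‖)) ≤ (Complex.I * (g : ℂ) * (a * starRingEnd ℂ b)).re := by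
    have := Complex.abs_re_le_norm (Complex.I * (g : ℂ) * (a * starRingEnd ℂ b))
    simp only [norm_mul, Complex.norm_I, Complex.norm_real, RCLike.norm_conj, one_mul,
      Real.norm_eq_abs] at this
    exact (abs_le.mp this).1
  have h2 : ‖a‖ ≤ d * √G := by
    have : ‖a‖ ≤ r * √G := by
      apply (fun h h' => (sq_le_sq₀ (norm_nonneg a) h').mp h) ?_ (by positivity)
      rw [mul_pow, Real.sq_sqrt hG]; exact ha
    exact this.trans (by gcongr)
  have h3 : |g| * (‖a‖ * ‖b‖) ≤ |g| * (d * √G * ‖b‖) := by gcongr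
  nlinarith [sq_nonneg (√G - d * |g| * ‖b‖), Real.sq_sqrt hG]

/-- Explicit Gårding inequality:
`Re a_L(t;u,u) + ((d_Ω |γ(t)|)² / 2) ‖u‖²_{L²} ≥ (1/2) ‖∇u‖²_{L²}`. -/
theorem aL_garding_explicit
    (n : ℕ) (Ω : Set (EuclideanSpace ℝ (Fin n)))
    (hΩo : IsOpen Ω) (hΩb : Bornology.IsBounded Ω)
    (dΩ : ℝ) (hdΩ : dΩ = sSup ((fun y => ‖y‖) '' Ω)) (γt : ℝ)
    (u : EuclideanSpace ℝ (Fin n) → ℂ)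
    (hu : ContDiff ℝ (⊤ : ℕ∞) u) (hucs : HasCompactSupport u) (husupp : tsupport u ⊆ Ω) :
    (1 / 2 : ℝ) * (∫ y in Ω, gradNormSq n u y) ≤
      (aL n γt Ω u u).re + ((dΩ * |γt|) ^ 2 / 2) * ∫ y in Ω, ‖u y‖ ^ 2 := by
  have hcd : Continuous (fderiv ℝ u) := hu.continuous_fderiv (by simp)
  have hcu : Continuous u := hu.continuous
  have hsd : HasCompactSupport (fderiv ℝ u) := hucs.fderiv ℝ
  have iG : Integrable (gradNormSq n u) := by
    apply Continuous.integrable_of_hasCompactSupport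
    · unfold gradNormSq; fun_prop
    · refine hsd.mono ?_
      intro y hy h0
      apply hy
      simp [gradNormSq, h0]
  have iA : Integrable (fun y => fderiv ℝ u y y * starRingEnd ℂ (u y)) := by
    apply Continuous.integrable_of_hasCompactSupport
    · exact (hcd.clm_apply continuous_id).mul (Complex.continuous_conj.comp hcu)
    · refine hsd.mono ?_
      intro y hy h0
      apply hy
      simp [h0]
  have iU : Integrable (fun y => ‖u y‖ ^ 2) := by
    apply Continuous.integrable_of_hasCompactSupport
    · fun_prop
    · refine hucs.mono ?_
      intro y hy h0
      apply hy
      simp [h0]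
  have iB : Integrable (fun y =>
      (Complex.I * (γt : ℂ) * (fderiv ℝ u y y * starRingEnd ℂ (u y))).re) :=
    (iA.const_mul _).re
  have iS : Integrable (fun y => gradNormSq n u y +
      (Complex.I * (γt : ℂ) * (fderiv ℝ u y y * starRingEnd ℂ (u y))).re) := iG.add iB
  have hre : (aL n γt Ω u u).re = (∫ y in Ω, gradNormSq n u y)
      + ∫ y in Ω, (Complex.I * (γt : ℂ) * (fderiv ℝ u y y * starRingEnd ℂ (u y))).re := by
    have h1 : (∫ y in Ω, (Complex.I * (γt : ℂ) * (fderiv ℝ u y y * starRingEnd ℂ (u y))).re)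
        = (∫ y in Ω, Complex.I * (γt : ℂ) * (fderiv ℝ u y y * starRingEnd ℂ (u y))).re :=
      integral_re (𝕜 := ℂ) (iA.const_mul _).integrableOn
    rw [h1, integral_const_mul, aL, Complex.add_re]
    simp_rw [gradDotConj_self]
    rw [integral_complex_ofReal, Complex.ofReal_re]
  rw [hre, ← integral_const_mul, ← integral_const_mul,
    ← integral_add iG.integrableOn iB.integrableOn,
    ← integral_add iS.integrableOn (iU.const_mul _).integrableOn]
  refine setIntegral_mono_on (iG.const_mul _).integrableOn
    (iS.add (iU.const_mul _)).integrableOn hΩo.measurableSet ?_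
  intro y hy
  have hyd : ‖y‖ ≤ dΩ := by
    rw [hdΩ]
    refine le_csSup ?_ (mem_image_of_mem _ hy)
    obtain ⟨C, hC⟩ := hΩb.exists_norm_le
    refine ⟨C, ?_⟩
    rintro _ ⟨z, hz, rfl⟩
    exact hC z hz
  exact pointwise_garding γt dΩ _ ‖y‖ _ _ (norm_nonneg y) hyd
    (Finset.sum_nonneg fun _ _ => by positivity) (fderiv_self_sq_le n u y)
end

section
/- Let E be a real or complex Banach space, let a < b be real numbers, and let f : [a,b] → E be three times continuously differentiable. Then ‖ (f(b) − f(a))/(b − a) − f'((a+b)/2) ‖ ≤ ((b − a)/8) ∫_a^b ‖f'''(t)‖ dt. (This is the second-order accuracy estimate for the Crank–Nicolson difference quotient at the interval midpoint.) -/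
open Set intervalIntegral

theorem cn_half_interval_bound
    {E : Type*} [NormedAddCommGroup E] [NormedSpace ℝ E] [CompleteSpace E]
    (u v c K : ℝ) (huv : u ≤ v) (f f' f'' f''' : ℝ → E)
    (hf : ∀ t ∈ Icc u v, HasDerivWithinAt f (f' t) (Icc u v) t)
    (hf' : ∀ t ∈ Icc u v, HasDerivWithinAt f' (f'' t) (Icc u v) t)
    (hf'' : ∀ t ∈ Icc u v, HasDerivWithinAt f'' (f''' t) (Icc u v) t)
    (hf''' : ContinuousOn f''' (Icc u v))
    (hK : ∀ t ∈ Icc u v, (t - c) ^ 2 / 2 ≤ K) :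
    ‖(f v - (v - c) • f' v + ((v - c) ^ 2 / 2) • f'' v) -
      (f u - (u - c) • f' u + ((u - c) ^ 2 / 2) • f'' u)‖ ≤ K * ∫ t in u..v, ‖f''' t‖ := by
  have hG : ∀ t ∈ Icc u v, HasDerivWithinAt
      (fun t => f t - (t - c) • f' t + ((t - c) ^ 2 / 2) • f'' t)
      (((t - c) ^ 2 / 2) • f''' t) (Icc u v) t := by
    intro t ht
    have h1 : HasDerivWithinAt (fun t : ℝ => t - c) 1 (Icc u v) t :=
      (hasDerivWithinAt_id t _).sub_const c
    have h2 : HasDerivWithinAt (fun t : ℝ => (t - c) ^ 2 / 2) (t - c) (Icc u v) t := by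
      have := (h1.pow 2).div_const 2
      exact this.congr_deriv (by norm_num)
    have := ((hf t ht).sub (h1.smul (hf' t ht))).add (h2.smul (hf'' t ht))
    refine this.congr_deriv ?_
    module
  have hc : ContinuousOn (fun t => ((t - c) ^ 2 / 2) • f''' t) (Icc u v) := by
    fun_prop
  have hI := integral_eq_sub_of_hasDerivAt_of_le huv
    (fun t ht => (hG t ht).continuousWithinAt)
    (fun t ht => (hG t (Ioo_subset_Icc_self ht)).hasDerivAt (Icc_mem_nhds ht.1 ht.2))
    (hc.intervalIntegrable_of_Icc huv)
  rw [← hI, ← intervalIntegral.integral_const_mul]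
  apply norm_integral_le_of_norm_le huv
  · refine Filter.Eventually.of_forall fun t ht => ?_
    rw [norm_smul, Real.norm_of_nonneg (by positivity)]
    exact mul_le_mul_of_nonneg_right (hK t (Ioc_subset_Icc_self ht)) (norm_nonneg _)
  · exact (continuousOn_const.mul hf'''.norm).intervalIntegrable_of_Icc huv

/-- Second-order accuracy of the Crank–Nicolson difference quotient at the midpoint:
`‖(f(b) - f(a))/(b - a) - f'((a+b)/2)‖ ≤ ((b - a)/8) ∫_a^b ‖f'''(t)‖ dt`
for `f : [a,b] → E` three times continuously differentiable. -/
theorem crank_nicolson_difference_quotient_estimate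
    {E : Type*} [NormedAddCommGroup E] [NormedSpace ℝ E] [CompleteSpace E]
    (a b : ℝ) (hab : a < b) (f f' f'' f''' : ℝ → E)
    (hf : ∀ t ∈ Icc a b, HasDerivWithinAt f (f' t) (Icc a b) t)
    (hf' : ∀ t ∈ Icc a b, HasDerivWithinAt f' (f'' t) (Icc a b) t)
    (hf'' : ∀ t ∈ Icc a b, HasDerivWithinAt f'' (f''' t) (Icc a b) t)
    (hf''' : ContinuousOn f''' (Icc a b)) :
    ‖(b - a)⁻¹ • (f b - f a) - f' ((a + b) / 2)‖ ≤
      ((b - a) / 8) * ∫ t in a..b, ‖f''' t‖ := by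
  obtain ⟨m, hm⟩ : ∃ m, m = (a + b) / 2 := ⟨_, rfl⟩
  have ham : a ≤ m := by linarith
  have hmb : m ≤ b := by linarith
  have s1 : Icc a m ⊆ Icc a b := Icc_subset_Icc_right hmb
  have s2 : Icc m b ⊆ Icc a b := Icc_subset_Icc_left ham
  have h1 := cn_half_interval_bound a m a ((b - a) ^ 2 / 8) ham f f' f'' f'''
    (fun t ht => (hf t (s1 ht)).mono s1) (fun t ht => (hf' t (s1 ht)).mono s1)
    (fun t ht => (hf'' t (s1 ht)).mono s1) (hf'''.mono s1)
    (fun t ht => by nlinarith [ht.1, ht.2])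
  have h2 := cn_half_interval_bound m b b ((b - a) ^ 2 / 8) hmb f f' f'' f'''
    (fun t ht => (hf t (s2 ht)).mono s2) (fun t ht => (hf' t (s2 ht)).mono s2)
    (fun t ht => (hf'' t (s2 ht)).mono s2) (hf'''.mono s2)
    (fun t ht => by nlinarith [ht.1, ht.2])
  have hadd := integral_add_adjacent_intervals
    ((hf'''.mono s1).norm.intervalIntegrable_of_Icc (μ := MeasureTheory.volume) ham)
    ((hf'''.mono s2).norm.intervalIntegrable_of_Icc hmb)
  have hpos : 0 < b - a := by linarith
  have h3 := (norm_add_le _ _).trans (add_le_add h1 h2)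
  rw [← mul_add, hadd] at h3
  have e : (b - a)⁻¹ • (f b - f a) - f' ((a + b) / 2) =
      (b - a)⁻¹ • ((f m - (m - a) • f' m + ((m - a) ^ 2 / 2) • f'' m -
        (f a - (a - a) • f' a + ((a - a) ^ 2 / 2) • f'' a)) +
      (f b - (b - b) • f' b + ((b - b) ^ 2 / 2) • f'' b -
        (f m - (m - b) • f' m + ((m - b) ^ 2 / 2) • f'' m))) := by
    rw [← hm, eq_inv_smul_iff₀ hpos.ne', smul_sub, smul_inv_smul₀ hpos.ne']
    have : b = 2 * m - a := by linarith
    have e2 : (m - b) ^ 2 = (m - a) ^ 2 := by rw [this]; ring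
    rw [e2]
    module
  rw [e, norm_smul, Real.norm_of_nonneg (by positivity)]
  calc _ ≤ (b - a)⁻¹ * ((b - a) ^ 2 / 8 * ∫ t in a..b, ‖f''' t‖) := by gcongr
    _ = _ := by field_simp
end
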